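/- Let μ > 0, γ > 0 and r ∈ (−1, 1). Then there exists a constant c₀ > 1 such that for every c ≥ c₀ the function b(t) = μ (1+t)^{−r} (log(c+t))^{−γ}, t ≥ 0, is an effective dissipation coefficient; that is: b is positive and monotone on [0,∞); t·b(t) → ∞ as t → ∞; t ↦ ((1+t)²b(t))^{-1} is integrable on (0,∞); b is of class C³ and there is a constant C > 0 such that |b^{(k)}(t)| ≤ C·b(t)/(1+t)^k for k = 1,2,3 and all t ≥ 0; 1/b is not integrable on (0,∞); and there exists a ∈ [0,1) with t·b'(t) ≤ a·b(t) for all t ≥ 0. -/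

import Mathlib

/-!
Write `s = 1 + t` and `L = log (c + t)`. The logarithmic derivative of `b` is
`p = -r / s - γ / ((c + t) L)`, so `b' = b p`, `b'' = b (p² + p')` and `b''' = b (p³ + 3 p p' + p'')`.
For `c ≥ exp 1` one has `1 / (c + t) ≤ 1 / s` and `1 / L ≤ 1`; as `p`, `p'`, `p''` are polynomials in
`1 / s`, `1 / (c + t)`, `1 / L`, they are `O(s⁻¹)`, `O(s⁻²)`, `O(s⁻³)`, which gives the derivative
bounds. Moreover `t p ≤ max 0 (-r) < 1`.

The sign of `p` is constant: it is nonpositive if `r ≥ 0`, and nonnegative if `r < 0` provided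
`log c ≥ γ / |r|`. This is where `c` has to be large, and `c₀ = exp (1 + γ / |r|)` works.

The conditions at infinity follow from `1 ≤ L ^ γ ≤ M s ^ δ` with `δ = (1 - r) / 2`: `t b(t)` is
at least a multiple of `s ^ δ`, `(s² b)⁻¹` is at most a multiple of `s ^ (-1 - δ)`, and `1 / b` is at
least a multiple of `s ^ r ≥ s⁻¹`.
-/

open MeasureTheory Filter

/-- `b` is an effective dissipation coefficient on `[0,∞)`:
`b` is positive and monotonic, `t·b(t) → ∞`, `((1+t)²b(t))⁻¹` is integrable on `(0,∞)`,
`b ∈ C³` with `|b⁽ᵏ⁾(t)| ≤ C·b(t)/(1+t)ᵏ` for `k = 1,2,3`, `1/b` is not integrable on `(0,∞)`,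
and `t·b'(t) ≤ a·b(t)` for some `a ∈ [0,1)`. -/
def EffectiveDissipation (b : ℝ → ℝ) : Prop :=
  (∀ t, 0 ≤ t → 0 < b t) ∧
  (MonotoneOn b (Set.Ici 0) ∨ AntitoneOn b (Set.Ici 0)) ∧
  Tendsto (fun t => t * b t) atTop atTop ∧
  IntegrableOn (fun t => ((1 + t) ^ 2 * b t)⁻¹) (Set.Ioi 0) ∧
  ContDiffOn ℝ 3 b (Set.Ici 0) ∧
  (∃ C > 0, ∀ k ∈ ({1, 2, 3} : Set ℕ), ∀ t, 0 ≤ t →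
    |iteratedDerivWithin k b (Set.Ici 0) t| ≤ C * b t / (1 + t) ^ k) ∧
  ¬ IntegrableOn (fun t => 1 / b t) (Set.Ioi 0) ∧
  (∃ a, 0 ≤ a ∧ a < 1 ∧ ∀ t, 0 ≤ t → t * derivWithin b (Set.Ici 0) t ≤ a * b t)

/-! ### The coefficient and its logarithmic derivative -/

/-- The coefficient `μ (1+t)^{-r} (log(c+t))^{-γ}`. -/
noncomputable def coeffB (μ γ r c t : ℝ) : ℝ := μ * (1 + t) ^ (-r) * Real.log (c + t) ^ (-γ)

/-- The logarithmic derivative of `coeffB`. -/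
noncomputable def logDerivB (γ r c t : ℝ) : ℝ :=
  -r * (1 + t)⁻¹ - γ * ((c + t)⁻¹ * (Real.log (c + t))⁻¹)

/-- The derivative of `logDerivB`. -/
noncomputable def logDerivB' (γ r c t : ℝ) : ℝ :=
  r * (1 + t)⁻¹ ^ 2 + γ * ((c + t)⁻¹ ^ 2 * ((Real.log (c + t))⁻¹ + (Real.log (c + t))⁻¹ ^ 2))

/-- The second derivative of `logDerivB`. -/
noncomputable def logDerivB'' (γ r c t : ℝ) : ℝ :=
  -2 * r * (1 + t)⁻¹ ^ 3 - γ * ((c + t)⁻¹ ^ 3 *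
    (2 * (Real.log (c + t))⁻¹ + 3 * (Real.log (c + t))⁻¹ ^ 2 + 2 * (Real.log (c + t))⁻¹ ^ 3))

lemma one_le_log_add {c t : ℝ} (hc : Real.exp 1 ≤ c) (ht : 0 ≤ t) : 1 ≤ Real.log (c + t) := by
  rw [Real.le_log_iff_exp_le (by linarith [Real.exp_pos 1])]
  linarith

lemma one_le_of_exp_le {c : ℝ} (hc : Real.exp 1 ≤ c) : 1 ≤ c := by
  linarith [Real.add_one_le_exp (1 : ℝ)]

lemma coeffB_pos {μ γ r c t : ℝ} (hμ : 0 < μ) (hc : Real.exp 1 ≤ c) (ht : 0 ≤ t) :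
    0 < coeffB μ γ r c t := by
  have := one_le_log_add hc ht
  unfold coeffB
  positivity

/-! ### Derivatives up to order three -/

section Derivatives

variable {μ γ r c t : ℝ}

lemma hasDerivAt_inv_one_add (ht : 0 ≤ t) :
    HasDerivAt (fun t : ℝ => (1 + t)⁻¹) (-(1 + t)⁻¹ ^ 2) t := by
  have h1 : (1 + t) ≠ 0 := by positivity
  refine (((hasDerivAt_id' t).const_add 1).fun_inv h1).congr_deriv ?_
  field_simp

lemma hasDerivAt_inv_add (hc : Real.exp 1 ≤ c) (ht : 0 ≤ t) :
    HasDerivAt (fun t : ℝ => (c + t)⁻¹) (-(c + t)⁻¹ ^ 2) t := by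
  have h1 : (c + t) ≠ 0 := by linarith [one_le_of_exp_le hc]
  refine (((hasDerivAt_id' t).const_add c).fun_inv h1).congr_deriv ?_
  field_simp

lemma hasDerivAt_log_add (hc : Real.exp 1 ≤ c) (ht : 0 ≤ t) :
    HasDerivAt (fun t : ℝ => Real.log (c + t)) ((c + t)⁻¹) t := by
  have h1 : (c + t) ≠ 0 := by linarith [one_le_of_exp_le hc]
  exact (((hasDerivAt_id' t).const_add c).log h1).congr_deriv (one_div _)

lemma hasDerivAt_inv_log_add (hc : Real.exp 1 ≤ c) (ht : 0 ≤ t) :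
    HasDerivAt (fun t : ℝ => (Real.log (c + t))⁻¹)
      (-((c + t)⁻¹ * (Real.log (c + t))⁻¹ ^ 2)) t := by
  have h1 : Real.log (c + t) ≠ 0 := by linarith [one_le_log_add hc ht]
  refine ((hasDerivAt_log_add hc ht).fun_inv h1).congr_deriv ?_
  field_simp

lemma hasDerivAt_coeffB (hc : Real.exp 1 ≤ c) (ht : 0 ≤ t) :
    HasDerivAt (coeffB μ γ r c) (coeffB μ γ r c t * logDerivB γ r c t) t := by
  have h1 : 0 < 1 + t := by positivity
  have h2 : 0 < Real.log (c + t) := by linarith [one_le_log_add hc ht]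
  have d1 := (((hasDerivAt_id t).const_add 1).rpow_const (p := -r) (Or.inl h1.ne')).const_mul μ
  have d2 := (hasDerivAt_log_add hc ht).rpow_const (p := -γ) (Or.inl h2.ne')
  refine (d1.mul d2).congr_deriv ?_
  simp only [id, coeffB, logDerivB, Real.rpow_sub_one h1.ne', Real.rpow_sub_one h2.ne']
  field_simp
  ring

lemma hasDerivAt_logDerivB (hc : Real.exp 1 ≤ c) (ht : 0 ≤ t) :
    HasDerivAt (logDerivB γ r c) (logDerivB' γ r c t) t := by
  refine (((hasDerivAt_inv_one_add ht).const_mul (-r)).sub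
    (((hasDerivAt_inv_add hc ht).mul (hasDerivAt_inv_log_add hc ht)).const_mul γ)).congr_deriv ?_
  simp only [logDerivB']
  ring

lemma hasDerivAt_logDerivB' (hc : Real.exp 1 ≤ c) (ht : 0 ≤ t) :
    HasDerivAt (logDerivB' γ r c) (logDerivB'' γ r c t) t := by
  have dz := hasDerivAt_inv_log_add hc ht
  refine ((((hasDerivAt_inv_one_add ht).pow 2).const_mul r).add
    ((((hasDerivAt_inv_add hc ht).pow 2).mul (dz.add (dz.pow 2))).const_mul γ)).congr_deriv ?_
  simp only [logDerivB'', Pi.add_apply, Pi.pow_apply]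
  push_cast
  ring

lemma iteratedDerivWithin_succ_eq {f g : ℝ → ℝ} {g' : ℝ} {n : ℕ}
    (hf : Set.EqOn (iteratedDerivWithin n f (Set.Ici 0)) g (Set.Ici 0)) (ht : 0 ≤ t)
    (hg : HasDerivAt g g' t) : iteratedDerivWithin (n + 1) f (Set.Ici 0) t = g' := by
  rw [iteratedDerivWithin_succ, derivWithin_congr hf (hf ht)]
  exact hg.hasDerivWithinAt.derivWithin (uniqueDiffOn_Ici 0 t ht)

lemma iteratedDerivWithin_one_coeffB (hc : Real.exp 1 ≤ c) (ht : 0 ≤ t) :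
    iteratedDerivWithin 1 (coeffB μ γ r c) (Set.Ici 0) t =
      coeffB μ γ r c t * logDerivB γ r c t :=
  iteratedDerivWithin_succ_eq (g := coeffB μ γ r c) (fun x _ => by simp) ht (hasDerivAt_coeffB hc ht)

lemma iteratedDerivWithin_two_coeffB (hc : Real.exp 1 ≤ c) (ht : 0 ≤ t) :
    iteratedDerivWithin 2 (coeffB μ γ r c) (Set.Ici 0) t =
      coeffB μ γ r c t * (logDerivB γ r c t ^ 2 + logDerivB' γ r c t) := by
  refine iteratedDerivWithin_succ_eq (fun x hx => iteratedDerivWithin_one_coeffB hc hx) ht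
    (((hasDerivAt_coeffB hc ht).mul (hasDerivAt_logDerivB hc ht)).congr_deriv ?_)
  ring

lemma iteratedDerivWithin_three_coeffB (hc : Real.exp 1 ≤ c) (ht : 0 ≤ t) :
    iteratedDerivWithin 3 (coeffB μ γ r c) (Set.Ici 0) t =
      coeffB μ γ r c t * (logDerivB γ r c t ^ 3 + 3 * logDerivB γ r c t * logDerivB' γ r c t
        + logDerivB'' γ r c t) := by
  refine iteratedDerivWithin_succ_eq (fun x hx => iteratedDerivWithin_two_coeffB hc hx) ht
    (((hasDerivAt_coeffB hc ht).mul (((hasDerivAt_logDerivB hc ht).pow 2).add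
      (hasDerivAt_logDerivB' hc ht))).congr_deriv ?_)
  simp only [Pi.add_apply, Pi.pow_apply]
  push_cast
  ring

lemma contDiffOn_coeffB (hc : Real.exp 1 ≤ c) :
    ContDiffOn ℝ 3 (coeffB μ γ r c) (Set.Ici 0) := by
  intro t ht
  have ht : 0 ≤ t := ht
  have h1 : 1 + t ≠ 0 := by positivity
  have h2 : c + t ≠ 0 := by linarith [one_le_of_exp_le hc]
  have h3 : Real.log (c + t) ≠ 0 := by linarith [one_le_log_add hc ht]
  refine ContDiffAt.contDiffWithinAt ?_
  exact (contDiffAt_const.mul ((contDiffAt_const.add contDiffAt_id).rpow_const_of_ne h1)).mul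
    (((contDiffAt_const.add contDiffAt_id).log h2).rpow_const_of_ne h3)

end Derivatives

/-! ### Bounds on the derivatives -/

section Bounds

variable {μ γ r c t : ℝ}

lemma inv_bounds (hc : Real.exp 1 ≤ c) (ht : 0 ≤ t) :
    0 < (1 + t)⁻¹ ∧ 0 < (c + t)⁻¹ ∧ (c + t)⁻¹ ≤ (1 + t)⁻¹ ∧
      0 < (Real.log (c + t))⁻¹ ∧ (Real.log (c + t))⁻¹ ≤ 1 := by
  have h1 := one_le_of_exp_le hc
  have h2 := one_le_log_add hc ht
  refine ⟨by positivity, by positivity, ?_, by positivity, inv_le_one_of_one_le₀ h2⟩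
  gcongr

/-- A term `γ yⁿ w`, with `0 ≤ y ≤ x` and `0 ≤ w ≤ K`, added to or subtracted from `a xⁿ`, is `O(xⁿ)`. -/
lemma abs_add_le_mul_pow {a γ x y w K : ℝ} (n : ℕ) (hγ : 0 < γ) (hy : 0 ≤ y) (hyx : y ≤ x)
    (hw : 0 ≤ w) (hwK : w ≤ K) :
    |a * x ^ n + γ * (y ^ n * w)| ≤ (|a| + K * γ) * x ^ n ∧
    |a * x ^ n - γ * (y ^ n * w)| ≤ (|a| + K * γ) * x ^ n := by
  have hx : 0 ≤ x ^ n := pow_nonneg (hy.trans hyx) n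
  have h1 : |a * x ^ n| = |a| * x ^ n := by rw [abs_mul, abs_of_nonneg hx]
  have h2 : y ^ n * w ≤ x ^ n * K := by gcongr
  have h3 : |γ * (y ^ n * w)| ≤ γ * (x ^ n * K) := by
    rw [abs_of_nonneg (by positivity)]; gcongr
  constructor
  · linarith [abs_add_le (a * x ^ n) (γ * (y ^ n * w))]
  · linarith [abs_sub (a * x ^ n) (γ * (y ^ n * w))]

lemma abs_logDerivB_le (hγ : 0 < γ) (hc : Real.exp 1 ≤ c) (ht : 0 ≤ t) :
    |logDerivB γ r c t| ≤ (2 * |r| + 7 * γ) * (1 + t)⁻¹ := by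
  obtain ⟨h1, h2, h3, h4, h5⟩ := inv_bounds hc ht
  have := (abs_add_le_mul_pow (a := -r) 1 hγ h2.le h3 h4.le h5).2
  simp only [pow_one, abs_neg] at this
  refine this.trans ?_
  gcongr <;> linarith [abs_nonneg r]

lemma abs_logDerivB'_le (hγ : 0 < γ) (hc : Real.exp 1 ≤ c) (ht : 0 ≤ t) :
    |logDerivB' γ r c t| ≤ (2 * |r| + 7 * γ) * (1 + t)⁻¹ ^ 2 := by
  obtain ⟨h1, h2, h3, h4, h5⟩ := inv_bounds hc ht
  refine (abs_add_le_mul_pow (K := 2) 2 hγ h2.le h3 (by positivity) ?_).1.trans ?_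
  · linarith [pow_le_one₀ (n := 2) h4.le h5]
  · gcongr <;> linarith [abs_nonneg r]

lemma abs_logDerivB''_le (hγ : 0 < γ) (hc : Real.exp 1 ≤ c) (ht : 0 ≤ t) :
    |logDerivB'' γ r c t| ≤ (2 * |r| + 7 * γ) * (1 + t)⁻¹ ^ 3 := by
  obtain ⟨h1, h2, h3, h4, h5⟩ := inv_bounds hc ht
  refine (abs_add_le_mul_pow (K := 7) 3 hγ h2.le h3 (by positivity) ?_).2.trans ?_
  · linarith [pow_le_one₀ (n := 2) h4.le h5, pow_le_one₀ (n := 3) h4.le h5]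
  · rw [abs_mul]; norm_num

lemma derivative_bounds (hμ : 0 < μ) (hγ : 0 < γ) (hc : Real.exp 1 ≤ c) :
    ∃ C > 0, ∀ k ∈ ({1, 2, 3} : Set ℕ), ∀ t, 0 ≤ t →
      |iteratedDerivWithin k (coeffB μ γ r c) (Set.Ici 0) t| ≤
        C * coeffB μ γ r c t / (1 + t) ^ k := by
  set A := 2 * |r| + 7 * γ with hA
  have hA0 : 0 < A := by positivity
  refine ⟨A ^ 3 + 3 * A ^ 2 + A, by positivity, ?_⟩
  -- it suffices to bound the quotient of the derivative by `coeffB`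
  have key : ∀ (k : ℕ) (t q : ℝ), 0 ≤ t → |q| ≤ (A ^ 3 + 3 * A ^ 2 + A) * (1 + t)⁻¹ ^ k →
      |coeffB μ γ r c t * q| ≤ (A ^ 3 + 3 * A ^ 2 + A) * coeffB μ γ r c t / (1 + t) ^ k := by
    intro k t q ht hq
    have hb := coeffB_pos (γ := γ) (r := r) hμ hc ht
    rw [abs_mul, abs_of_pos hb]
    calc _ ≤ coeffB μ γ r c t * ((A ^ 3 + 3 * A ^ 2 + A) * (1 + t)⁻¹ ^ k) := by gcongr
      _ = _ := by rw [inv_pow]; ring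
  intro k hk t ht
  have hp := abs_logDerivB_le (r := r) hγ hc ht
  have hp' := abs_logDerivB'_le (r := r) hγ hc ht
  have hp'' := abs_logDerivB''_le (r := r) hγ hc ht
  rw [← hA] at hp hp' hp''
  have hx := (inv_bounds hc ht).1
  set x := (1 + t)⁻¹
  have hp2 : |logDerivB γ r c t ^ 2| ≤ (A * x) ^ 2 := by rw [abs_pow]; gcongr
  have hp3 : |logDerivB γ r c t ^ 3| ≤ (A * x) ^ 3 := by rw [abs_pow]; gcongr
  have hpp : |3 * logDerivB γ r c t * logDerivB' γ r c t| ≤ 3 * (A * x) * (A * x ^ 2) := by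
    rw [abs_mul, abs_mul, abs_of_pos (three_pos : (0 : ℝ) < 3)]; gcongr
  rcases hk with rfl | rfl | rfl
  · rw [iteratedDerivWithin_one_coeffB hc ht]
    refine key _ _ _ ht (hp.trans ?_)
    have : 0 ≤ (A ^ 3 + 3 * A ^ 2) * x := by positivity
    linarith
  · rw [iteratedDerivWithin_two_coeffB hc ht]
    refine key _ _ _ ht ((abs_add_le _ _).trans ?_)
    have : 0 ≤ (A ^ 3 + 2 * A ^ 2) * x ^ 2 := by positivity
    linarith
  · rw [iteratedDerivWithin_three_coeffB hc ht]
    refine key _ _ _ ht ((abs_add_three _ _ _).trans ?_)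
    linarith

/-! ### Sign of the derivative -/

lemma monotone_coeffB (hμ : 0 < μ) (hγ : 0 < γ) (hc : Real.exp 1 ≤ c)
    (hc' : γ / |r| ≤ Real.log c) :
    MonotoneOn (coeffB μ γ r c) (Set.Ici 0) ∨ AntitoneOn (coeffB μ γ r c) (Set.Ici 0) := by
  have hcont : ContinuousOn (coeffB μ γ r c) (Set.Ici 0) := (contDiffOn_coeffB hc).continuousOn
  have hderiv : ∀ t ∈ interior (Set.Ici (0 : ℝ)), HasDerivWithinAt (coeffB μ γ r c)
      (coeffB μ γ r c t * logDerivB γ r c t) (interior (Set.Ici 0)) t := fun t ht =>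
    (hasDerivAt_coeffB hc (interior_subset ht)).hasDerivWithinAt
  rcases lt_or_ge r 0 with hr | hr
  · left
    refine monotoneOn_of_hasDerivWithinAt_nonneg (convex_Ici 0) hcont hderiv fun t ht => ?_
    have ht : 0 ≤ t := interior_subset ht
    obtain ⟨h1, h2, h3, h4, h5⟩ := inv_bounds hc ht
    refine mul_nonneg (coeffB_pos hμ hc ht).le ?_
    have hlog : Real.log c ≤ Real.log (c + t) :=
      Real.log_le_log (by linarith [one_le_of_exp_le hc]) (by linarith)
    have hL := one_le_log_add hc ht
    rw [abs_of_neg hr, div_le_iff₀ (by linarith)] at hc'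
    have hz : γ * (Real.log (c + t))⁻¹ ≤ -r := by
      rw [← div_eq_mul_inv, div_le_iff₀ (by linarith)]
      nlinarith
    have : γ * (Real.log (c + t))⁻¹ * (c + t)⁻¹ ≤ -r * (1 + t)⁻¹ := by
      gcongr
      linarith
    unfold logDerivB
    linarith
  · right
    refine antitoneOn_of_hasDerivWithinAt_nonpos (convex_Ici 0) hcont hderiv fun t ht => ?_
    have ht : 0 ≤ t := interior_subset ht
    obtain ⟨h1, h2, h3, h4, h5⟩ := inv_bounds hc ht
    refine mul_nonpos_of_nonneg_of_nonpos (coeffB_pos hμ hc ht).le ?_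
    have e1 : 0 ≤ r * (1 + t)⁻¹ := by positivity
    have e2 : 0 ≤ γ * ((c + t)⁻¹ * (Real.log (c + t))⁻¹) := by positivity
    unfold logDerivB
    linarith

lemma mul_deriv_coeffB_le (hμ : 0 < μ) (hγ : 0 < γ) (hr₁ : -1 < r) (hc : Real.exp 1 ≤ c) :
    ∃ a, 0 ≤ a ∧ a < 1 ∧ ∀ t, 0 ≤ t →
      t * derivWithin (coeffB μ γ r c) (Set.Ici 0) t ≤ a * coeffB μ γ r c t := by
  refine ⟨max 0 (-r), le_max_left _ _, max_lt one_pos (by linarith), fun t ht => ?_⟩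
  rw [(hasDerivAt_coeffB hc ht).hasDerivWithinAt.derivWithin (uniqueDiffOn_Ici 0 t ht)]
  obtain ⟨h1, h2, h3, h4, h5⟩ := inv_bounds hc ht
  have hb := coeffB_pos (γ := γ) (r := r) hμ hc ht
  have e1 : t * (1 + t)⁻¹ ≤ 1 := by
    rw [← div_eq_mul_inv, div_le_one (by positivity)]; linarith
  have e2 : -r * (t * (1 + t)⁻¹) ≤ max 0 (-r) * 1 := by
    gcongr
    exact le_max_right _ _
  have e3 : 0 ≤ γ * (t * ((c + t)⁻¹ * (Real.log (c + t))⁻¹)) := by positivity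
  have e4 : t * logDerivB γ r c t ≤ max 0 (-r) := by
    unfold logDerivB
    linarith
  calc _ = (t * logDerivB γ r c t) * coeffB μ γ r c t := by ring
    _ ≤ _ := by gcongr

/-! ### Behaviour at infinity -/

/-- Powers of the logarithm grow more slowly than any positive power of `1 + t`. -/
lemma exists_log_rpow_le {δ : ℝ} (hγ : 0 < γ) (hδ : 0 < δ) (hc : Real.exp 1 ≤ c) :
    ∃ M > 0, ∀ t, 0 ≤ t → Real.log (c + t) ^ γ ≤ M * (1 + t) ^ δ := by
  have hc1 := one_le_of_exp_le hc
  refine ⟨c ^ δ / (δ / γ) ^ γ, by positivity, fun t ht => ?_⟩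
  have hL := one_le_log_add hc ht
  have h0 : 0 ≤ c + t := by positivity
  calc Real.log (c + t) ^ γ ≤ ((c + t) ^ (δ / γ) / (δ / γ)) ^ γ := by
        gcongr
        exact Real.log_le_rpow_div h0 (by positivity)
    _ = (c + t) ^ δ / (δ / γ) ^ γ := by
        rw [Real.div_rpow (by positivity) (by positivity), ← Real.rpow_mul h0,
          div_mul_cancel₀ _ hγ.ne']
    _ ≤ (c * (1 + t)) ^ δ / (δ / γ) ^ γ := by
        gcongr
        nlinarith
    _ = _ := by
        rw [Real.mul_rpow (by positivity) (by positivity)]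
        ring

lemma tendsto_mul_coeffB (hμ : 0 < μ) (hγ : 0 < γ) (hr₂ : r < 1) (hc : Real.exp 1 ≤ c) :
    Tendsto (fun t => t * coeffB μ γ r c t) atTop atTop := by
  obtain ⟨δ, hδ⟩ : ∃ δ, δ = (1 - r) / 2 := ⟨_, rfl⟩
  have hδ0 : 0 < δ := by linarith
  obtain ⟨M, hM, hLM⟩ := exists_log_rpow_le hγ hδ0 hc
  have hlim : Tendsto (fun t : ℝ => μ / (2 * M) * (1 + t) ^ δ) atTop atTop :=
    ((tendsto_rpow_atTop hδ0).comp (tendsto_atTop_add_const_left _ _ tendsto_id)).const_mul_atTop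
      (by positivity)
  refine tendsto_atTop_mono' _ ?_ hlim
  filter_upwards [eventually_ge_atTop 1] with t ht
  have ht0 : 0 ≤ t := by linarith
  have hs : 0 < 1 + t := by linarith
  have hL := one_le_log_add hc ht0
  have hexp : (1 + t) ^ δ = (1 + t) * (1 + t) ^ (-r) * ((1 + t) ^ δ)⁻¹ := by
    rw [← Real.rpow_neg hs.le, ← Real.rpow_one_add' hs.le (by linarith), ← Real.rpow_add hs]
    congr 1
    linarith
  calc μ / (2 * M) * (1 + t) ^ δ
      = (1 + t) / 2 * (μ * (1 + t) ^ (-r) * (M * (1 + t) ^ δ)⁻¹) := by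
        conv_lhs => rw [hexp]
        rw [mul_inv]
        field_simp
    _ ≤ t * (μ * (1 + t) ^ (-r) * (Real.log (c + t) ^ γ)⁻¹) := by
        gcongr
        · linarith
        · exact hLM t ht0
    _ = t * coeffB μ γ r c t := by
        rw [coeffB, Real.rpow_neg (by linarith : (0 : ℝ) ≤ Real.log (c + t))]

lemma integrableOn_inv_coeffB (hμ : 0 < μ) (hγ : 0 < γ) (hr₂ : r < 1) (hc : Real.exp 1 ≤ c) :
    IntegrableOn (fun t => ((1 + t) ^ 2 * coeffB μ γ r c t)⁻¹) (Set.Ioi 0) := by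
  obtain ⟨δ, hδ⟩ : ∃ δ, δ = (1 - r) / 2 := ⟨_, rfl⟩
  have hδ0 : 0 < δ := by linarith
  obtain ⟨M, hM, hLM⟩ := exists_log_rpow_le hγ hδ0 hc
  have hint : IntegrableOn (fun t : ℝ => M / μ * (t + 1) ^ (-1 - δ)) (Set.Ioi 0) :=
    (integrableOn_add_rpow_Ioi_of_lt (by linarith) (by norm_num)).const_mul _
  refine hint.mono' ?_ ?_
  · refine ContinuousOn.aestronglyMeasurable ?_ measurableSet_Ioi
    refine ContinuousOn.inv₀ (ContinuousOn.mul (by fun_prop)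
      ((contDiffOn_coeffB hc).continuousOn.mono Set.Ioi_subset_Ici_self)) fun t ht => ?_
    have ht : 0 < t := ht
    have := coeffB_pos (γ := γ) (r := r) hμ hc ht.le
    positivity
  · refine (ae_restrict_iff' measurableSet_Ioi).2 (Eventually.of_forall fun t ht => ?_)
    have ht : 0 < t := ht
    have hs : 0 < 1 + t := by positivity
    have hL := one_le_log_add hc ht.le
    have hb := coeffB_pos (γ := γ) (r := r) hμ hc ht.le
    rw [Real.norm_of_nonneg (by positivity)]
    have hexp : (1 + t) ^ (-1 - δ) = ((1 + t) ^ 2 * (1 + t) ^ (-r))⁻¹ * (1 + t) ^ δ := by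
      rw [← Real.rpow_natCast, ← Real.rpow_add hs, ← Real.rpow_neg hs.le, ← Real.rpow_add hs]
      congr 1
      push_cast
      linarith
    calc ((1 + t) ^ 2 * coeffB μ γ r c t)⁻¹
        = ((1 + t) ^ 2 * (1 + t) ^ (-r))⁻¹ * Real.log (c + t) ^ γ / μ := by
          rw [coeffB, Real.rpow_neg (by linarith : (0 : ℝ) ≤ Real.log (c + t))]
          field_simp
      _ ≤ ((1 + t) ^ 2 * (1 + t) ^ (-r))⁻¹ * (M * (1 + t) ^ δ) / μ := by
          gcongr
          exact hLM t ht.le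
      _ = M / μ * (t + 1) ^ (-1 - δ) := by
          rw [add_comm t 1, hexp]
          ring

lemma not_integrableOn_one_div_coeffB (hμ : 0 < μ) (hγ : 0 < γ) (hr₁ : -1 < r)
    (hc : Real.exp 1 ≤ c) : ¬ IntegrableOn (fun t => 1 / coeffB μ γ r c t) (Set.Ioi 0) := by
  intro h
  refine not_integrableOn_Ioi_inv (a := 1) ?_
  refine ((h.mono_set (Set.Ioi_subset_Ioi zero_le_one)).const_mul (2 * μ)).mono'
    measurable_inv.aestronglyMeasurable ?_
  refine (ae_restrict_iff' measurableSet_Ioi).2 (Eventually.of_forall fun t ht => ?_)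
  have ht : 1 < t := ht
  have hs : 0 < 1 + t := by positivity
  have hL := one_le_log_add hc (by linarith : 0 ≤ t)
  rw [Real.norm_of_nonneg (by positivity)]
  have h1 : (1 : ℝ) ≤ Real.log (c + t) ^ γ := Real.one_le_rpow hL hγ.le
  have h2 : (1 + t)⁻¹ ≤ (1 + t) ^ r := by
    rw [← Real.rpow_neg_one]
    exact Real.rpow_le_rpow_of_exponent_le (by linarith) hr₁.le
  calc t⁻¹ = 2 * ((2 * t)⁻¹ * 1) := by field_simp
    _ ≤ 2 * ((1 + t)⁻¹ * 1) := by gcongr; linarith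
    _ ≤ 2 * ((1 + t) ^ r * Real.log (c + t) ^ γ) := by gcongr
    _ = 2 * μ * (1 / coeffB μ γ r c t) := by
        rw [coeffB, Real.rpow_neg (by linarith : (0 : ℝ) ≤ Real.log (c + t)), Real.rpow_neg hs.le]
        field_simp

end Bounds

/-- For `μ > 0`, `γ > 0`, `r ∈ (−1,1)`, there is `c₀ > 1` such that for all `c ≥ c₀` the
function `b(t) = μ (1+t)^{−r} (log(c+t))^{−γ}` is an effective dissipation coefficient. -/
theorem stmt8 (μ γ r : ℝ) (hμ : 0 < μ) (hγ : 0 < γ) (hr₁ : -1 < r) (hr₂ : r < 1) :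
    ∃ c₀ : ℝ, 1 < c₀ ∧ ∀ c : ℝ, c₀ ≤ c →
      EffectiveDissipation (fun t => μ * (1 + t) ^ (-r) * Real.log (c + t) ^ (-γ)) := by
  -- for `r = 0` the quotient is `0`, and indeed only `exp 1 ≤ c` is needed then
  have hq : 0 ≤ γ / |r| := by positivity
  refine ⟨Real.exp (1 + γ / |r|), Real.one_lt_exp_iff.2 (by linarith), fun c hc => ?_⟩
  have hc1 : Real.exp 1 ≤ c := le_trans (Real.exp_le_exp.2 (by linarith)) hc
  have hc2 : γ / |r| ≤ Real.log c := by
    have := (Real.le_log_iff_exp_le (by linarith [one_le_of_exp_le hc1])).2 hc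
    linarith
  exact ⟨fun t ht => coeffB_pos hμ hc1 ht, monotone_coeffB hμ hγ hc1 hc2,
    tendsto_mul_coeffB hμ hγ hr₂ hc1, integrableOn_inv_coeffB hμ hγ hr₂ hc1,
    contDiffOn_coeffB hc1, derivative_bounds hμ hγ hc1,
    not_integrableOn_one_div_coeffB hμ hγ hr₁ hc1, mul_deriv_coeffB_le hμ hγ hr₁ hc1⟩
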